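/- Let n ≥ 1, k ≥ 1, and let φ be a CNF formula over n variables in which every clause contains at most k literals. Then the number of isolated solutions of φ is at most 2^{n − n/k}. -/

import Mathlib

/-!
The proof follows the satisfiability coding lemma: an isolated solution `x` has, for every
coordinate `i`, a critical clause whose only literal true at `x` is the one on `i`. When the
coordinates of `x` are revealed in a random order, the bit `x i` is implied by the earlier ones
whenever `i` comes last among the variables of its critical clause, so it need not be written down.
This happens with probability at least `1 / k`, and Kraft's inequality turns an expected code
length of `n - n / k` into the bound on the number of isolated solutions.

The random order is replaced by an induction on the set `U` of coordinates not yet revealed.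
`codeExp V U x` is minus the expected number of bits still to be written. It equals the average,
over the coordinate `j ∈ U` revealed next, of the exponents after revealing `j`, less one
whenever the bit `x j` has to be paid for (`codeExp_eq_average`). Convexity of `2 ^ t` then carries the Kraft inequality from the sets
`U.erase j` to `U` (`kraft`): if `x j` is implied for some `x` then all remaining solutions share
that bit and no factor `1 / 2` is needed; otherwise the two halves each get a factor `1 / 2`.
-/

/-- A literal over `n` variables: a coordinate `x_i` (if `neg = false`)
or its negation `¬ x_i` (if `neg = true`). -/
structure Lit (n : ℕ) where
  idx : Fin n
  neg : Bool
deriving DecidableEq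

/-- Evaluation of a literal at an assignment. -/
def Lit.eval {n : ℕ} (l : Lit n) (x : Fin n → Bool) : Bool :=
  if l.neg then !(x l.idx) else x l.idx

/-- A clause: a finite set of literals, evaluated as their disjunction. -/
abbrev Clause (n : ℕ) := Finset (Lit n)

/-- A CNF formula: a finite set of clauses, evaluated as their conjunction.
Its size is its number of clauses (`Finset.card`). -/
abbrev CNF (n : ℕ) := Finset (Clause n)

/-- `φ.sat x` means the CNF formula `φ` evaluates to `1` at `x`. -/
def CNF.sat {n : ℕ} (φ : CNF n) (x : Fin n → Bool) : Prop :=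
  ∀ c ∈ φ, ∃ l ∈ c, l.eval x = true

instance {n : ℕ} (φ : CNF n) (x : Fin n → Bool) : Decidable (φ.sat x) :=
  inferInstanceAs (Decidable (∀ c ∈ φ, ∃ l ∈ c, Lit.eval l x = true))

/-- `φ⁻¹(1) ⊆ f⁻¹(1)`: the formula does not err on inputs where `f` is `0`. -/
def CNF.onesided {n : ℕ} (φ : CNF n) (f : (Fin n → Bool) → Bool) : Prop :=
  ∀ x, φ.sat x → f x = true

/-- A CNF formula is monotone if none of its literals is negated. -/
def CNF.mono {n : ℕ} (φ : CNF n) : Prop :=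
  ∀ c ∈ φ, ∀ l ∈ c, l.neg = false

/-- A distribution on `f⁻¹(1)`: nonnegative, supported on `f⁻¹(1)`, summing to 1. -/
def IsDistOn {n : ℕ} (μ : (Fin n → Bool) → ℝ) (f : (Fin n → Bool) → Bool) : Prop :=
  (∀ x, 0 ≤ μ x) ∧ (∀ x, f x = false → μ x = 0) ∧ (∑ x, μ x) = 1

/-- `Pr_{x ∼ μ}[φ(x) = 1]`. -/
noncomputable def CNF.pr {n : ℕ} (φ : CNF n) (μ : (Fin n → Bool) → ℝ) : ℝ :=
  ∑ x, if φ.sat x then μ x else 0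

/-- `D_μ(f)`: the maximum, over CNF formulas `φ` with `φ⁻¹(1) ⊆ f⁻¹(1)` and `|φ| ≥ 1`,
of `Pr_{x∼μ}[φ(x)=1] / |φ|` (0 if there is no such formula). -/
noncomputable def Dmu {n : ℕ} (f : (Fin n → Bool) → Bool) (μ : (Fin n → Bool) → ℝ) : ℝ :=
  sSup {r : ℝ | ∃ φ : CNF n, φ.onesided f ∧ 1 ≤ φ.card ∧ r = φ.pr μ / φ.card}

/-- `D(f)`: the minimum of `D_μ(f)` over distributions `μ` on `f⁻¹(1)`. -/
noncomputable def Dof {n : ℕ} (f : (Fin n → Bool) → Bool) : ℝ :=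
  sInf {r : ℝ | ∃ μ, IsDistOn μ f ∧ r = Dmu f μ}

/-- The monotone variant `D⁺_μ(f)`, restricted to monotone CNF formulas. -/
noncomputable def DmuPlus {n : ℕ} (f : (Fin n → Bool) → Bool) (μ : (Fin n → Bool) → ℝ) : ℝ :=
  sSup {r : ℝ | ∃ φ : CNF n, φ.mono ∧ φ.onesided f ∧ 1 ≤ φ.card ∧ r = φ.pr μ / φ.card}

/-- `D⁺(f)`: the minimum of `D⁺_μ(f)` over distributions `μ` on `f⁻¹(1)`. -/
noncomputable def DPlus {n : ℕ} (f : (Fin n → Bool) → Bool) : ℝ :=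
  sInf {r : ℝ | ∃ μ, IsDistOn μ f ∧ r = DmuPlus f μ}

/-- A list of CNF formulas computes `f` as their pointwise disjunction. -/
def ComputedByOr {n : ℕ} (L : List (CNF n)) (f : (Fin n → Bool) → Bool) : Prop :=
  ∀ x, f x = true ↔ ∃ φ ∈ L, φ.sat x

/-- `L₃(f)`: the minimum size (total number of clauses) of a depth-3 formula computing `f`. -/
noncomputable def L3 {n : ℕ} (f : (Fin n → Bool) → Bool) : ℕ :=
  sInf {s : ℕ | ∃ L : List (CNF n), ComputedByOr L f ∧ s = (L.map Finset.card).sum}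

/-- `L₃⁺(f)`: the minimum size of a depth-3 monotone formula computing `f`. -/
noncomputable def L3Plus {n : ℕ} (f : (Fin n → Bool) → Bool) : ℕ :=
  sInf {s : ℕ | ∃ L : List (CNF n), (∀ φ ∈ L, φ.mono) ∧ ComputedByOr L f ∧
    s = (L.map Finset.card).sum}

/-- The number of ones in a Boolean input. -/
def ones {n : ℕ} (x : Fin n → Bool) : ℕ := (Finset.univ.filter fun i => x i = true).card

/-- The parity function: `1` iff the number of ones is odd. -/
def parityF (n : ℕ) : (Fin n → Bool) → Bool := fun x => decide (ones x % 2 = 1)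

/-- The majority function: `1` iff the number of ones is at least `n/2`. -/
def majF (n : ℕ) : (Fin n → Bool) → Bool := fun x => decide (n ≤ 2 * ones x)

/-- `Pr_{x uniform in f⁻¹(1)}[φ(x) = 1]`. -/
noncomputable def prUnif {n : ℕ} (f : (Fin n → Bool) → Bool) (φ : CNF n) : ℝ :=
  ((Finset.univ.filter fun x => f x = true ∧ φ.sat x).card : ℝ) /
    ((Finset.univ.filter fun x => f x = true).card : ℝ)

/-- `x` is an isolated solution of `φ`: `φ(x)=1` and `φ(y)=0` for every `y`
differing from `x` in exactly one coordinate. -/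
def IsIsolated {n : ℕ} (φ : CNF n) (x : Fin n → Bool) : Prop :=
  φ.sat x ∧ ∀ y : Fin n → Bool, hammingDist x y = 1 → ¬ φ.sat y

/-! ### The expected code length -/

/-- Minus the expected number of bits needed to complete the encoding of `x` when the coordinates
in `U` are still hidden and are revealed in random order; `V x i` is the variable set of a critical
clause for `i` at `x`, and the bit `x i` costs nothing exactly when `i` is revealed last in `V x i`. -/
noncomputable def codeExp {n : ℕ} (V : (Fin n → Bool) → Fin n → Finset (Fin n))
    (U : Finset (Fin n)) (x : Fin n → Bool) : ℝ :=
  -(U.card : ℝ) + ∑ i ∈ U, 1 / ((V x i ∩ U).card : ℝ)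

/-- The averaging identity for one coordinate `i` with hidden critical variables `W`: the chance
`1 / #W` that `i` is revealed last in `W` is the mean of the same chances after one step.
The term for `j = i` is the indicator of `W = {i}`. -/
lemma sum_one_div_card_erase {n : ℕ} (U W : Finset (Fin n)) (i : Fin n) (hi : i ∈ W)
    (hW : W ⊆ U) :
    ∑ j ∈ U.erase i, 1 / ((W.erase j).card : ℝ) + (if W = {i} then 1 else 0) =
      (U.card : ℝ) * (1 / (W.card : ℝ)) := by
  have hs : 0 < W.card := Finset.card_pos.mpr ⟨i, hi⟩
  have hs' : (W.card : ℝ) ≠ 0 := by positivity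
  have hsub : W.erase i ⊆ U.erase i := Finset.erase_subset_erase _ hW
  have hdiff : U.erase i \ W.erase i = U \ W := by
    ext j
    simp only [Finset.mem_sdiff, Finset.mem_erase]
    by_cases h : j = i
    · simp [h, hi]
    · simp [h]
  rw [← Finset.sum_sdiff hsub, hdiff]
  have h1 : ∑ j ∈ U \ W, 1 / ((W.erase j).card : ℝ)
      = ((U.card : ℝ) - W.card) * (1 / (W.card : ℝ)) := by
    rw [Finset.sum_congr rfl (g := fun _ => 1 / (W.card : ℝ))]
    · rw [Finset.sum_const, Finset.card_sdiff_of_subset hW, nsmul_eq_mul,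
        Nat.cast_sub (Finset.card_le_card hW)]
    · intro j hj
      rw [Finset.erase_eq_of_notMem (Finset.mem_sdiff.mp hj).2]
  have h2 : ∑ j ∈ W.erase i, 1 / ((W.erase j).card : ℝ) + (if W = {i} then 1 else 0) = 1 := by
    by_cases h : W = {i}
    · simp [h]
    · have hc : W.card ≠ 1 := by
        intro hc
        obtain ⟨a, rfl⟩ := Finset.card_eq_one.mp hc
        simp at hi
        simp [hi] at h
      have h3 : (W.card : ℝ) - 1 ≠ 0 := by
        intro h0
        exact hc (by exact_mod_cast (sub_eq_zero.mp h0))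
      rw [Finset.sum_congr rfl (g := fun _ => 1 / ((W.card : ℝ) - 1))]
      · rw [Finset.sum_const, Finset.card_erase_of_mem hi, nsmul_eq_mul, Nat.cast_sub hs]
        simp [h, h3]
      · intro j hj
        rw [Finset.card_erase_of_mem (Finset.mem_of_mem_erase hj), Nat.cast_sub hs]
        simp
  rw [add_assoc, h2, h1]
  field_simp
  ring

/-- The exponent is the mean, over the next revealed coordinate `j`, of the exponent afterwards
minus the bit paid for `j` unless that bit is implied. -/
lemma codeExp_eq_average {n : ℕ} (V : (Fin n → Bool) → Fin n → Finset (Fin n))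
    (U : Finset (Fin n)) (hU : U.Nonempty) (x : Fin n → Bool) (hV : ∀ i, i ∈ V x i) :
    codeExp V U x = ∑ j ∈ U, (1 / (U.card : ℝ)) *
      (codeExp V (U.erase j) x + (if V x j ∩ U = {j} then 0 else -1)) := by
  have hs : 0 < U.card := Finset.card_pos.mpr hU
  have hs' : (U.card : ℝ) ≠ 0 := by positivity
  have key : ∑ j ∈ U, (codeExp V (U.erase j) x + (if V x j ∩ U = {j} then 0 else -1)) =
      U.card * codeExp V U x := by
    have h1 : ∀ j ∈ U, codeExp V (U.erase j) x + (if V x j ∩ U = {j} then 0 else -1) =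
        -(U.card : ℝ) + (∑ i ∈ U.erase j, 1 / (((V x i ∩ U).erase j).card : ℝ) +
          (if V x j ∩ U = {j} then 1 else 0)) := by
      intro j hj
      simp only [codeExp, Finset.inter_erase]
      rw [Finset.card_erase_of_mem hj, Nat.cast_sub hs]
      split_ifs <;> push_cast <;> ring
    have hswap : ∑ j ∈ U, ∑ i ∈ U.erase j, 1 / (((V x i ∩ U).erase j).card : ℝ) =
        ∑ i ∈ U, ∑ j ∈ U.erase i, 1 / (((V x i ∩ U).erase j).card : ℝ) := by
      apply Finset.sum_comm'
      intro a b
      simp only [Finset.mem_erase]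
      tauto
    rw [Finset.sum_congr rfl h1, Finset.sum_add_distrib, Finset.sum_add_distrib, hswap,
      ← Finset.sum_add_distrib, Finset.sum_congr rfl (fun i hi => sum_one_div_card_erase U
        (V x i ∩ U) i (Finset.mem_inter.mpr ⟨hV i, hi⟩) Finset.inter_subset_right),
      ← Finset.mul_sum, Finset.sum_const, nsmul_eq_mul, codeExp]
    ring
  rw [← Finset.mul_sum, key]
  field_simp

/-! ### Kraft's inequality -/

/-- Kraft's inequality for the random-order code, restricted to a set `T` of solutions that agree
on the revealed coordinates. The hypothesis `hcrit` is the only property of critical clauses that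
is needed: the values on `V x i` other than at `i` determine the value at `i`. -/
lemma kraft {n : ℕ} (V : (Fin n → Bool) → Fin n → Finset (Fin n)) (S : Finset (Fin n → Bool))
    (hV : ∀ x ∈ S, ∀ i, i ∈ V x i)
    (hcrit : ∀ x ∈ S, ∀ y ∈ S, ∀ i, (∀ l ∈ V x i, l ≠ i → y l = x l) → y i = x i)
    (U : Finset (Fin n)) :
    ∀ T ⊆ S, (∀ x ∈ T, ∀ y ∈ T, ∀ i ∉ U, x i = y i) →
      ∑ x ∈ T, (2 : ℝ) ^ codeExp V U x ≤ 1 := by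
  induction U using Finset.strongInduction with
  | H U ih =>
  intro T hT hagree
  rcases U.eq_empty_or_nonempty with rfl | hU
  · -- Everything is revealed: at most one solution is left, with exponent `0`.
    have hc : T.card ≤ 1 := Finset.card_le_one.mpr fun x hx y hy =>
      funext fun i => hagree x hx y hy i (by simp)
    simpa [codeExp] using hc
  · have hs : 0 < U.card := Finset.card_pos.mpr hU
    have hs' : (U.card : ℝ) ≠ 0 := by positivity
    have hstep : ∀ j ∈ U, ∑ x ∈ T, (2 : ℝ) ^ (codeExp V (U.erase j) x +
        (if V x j ∩ U = {j} then 0 else -1)) ≤ 1 := by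
      intro j hj
      have hhalf : ∀ b : Bool, ∑ x ∈ T with x j = b, (2 : ℝ) ^ codeExp V (U.erase j) x ≤ 1 := by
        intro b
        apply ih _ (Finset.erase_ssubset hj) _ ((Finset.filter_subset _ _).trans hT)
        intro x hx y hy i hi
        rw [Finset.mem_filter] at hx hy
        by_cases hij : i = j
        · rw [hij, hx.2, hy.2]
        · exact hagree x hx.1 y hy.1 i fun h => hi (Finset.mem_erase.mpr ⟨hij, h⟩)
      by_cases hf : ∃ x ∈ T, V x j ∩ U = {j}
      · -- `x j` is implied for `z`, so all of `T` lies in the half `x j = z j`.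
        obtain ⟨z, hz, hzj⟩ := hf
        have hall : ∀ y ∈ T, y j = z j := by
          intro y hy
          apply hcrit z (hT hz) y (hT hy)
          intro l hl hlj
          apply hagree y hy z hz
          intro hlU
          have : l ∈ V z j ∩ U := Finset.mem_inter.mpr ⟨hl, hlU⟩
          rw [hzj, Finset.mem_singleton] at this
          exact hlj this
        have h := hhalf (z j)
        rw [Finset.filter_true_of_mem hall] at h
        refine (Finset.sum_le_sum fun x _ => ?_).trans h
        apply Real.rpow_le_rpow_of_exponent_le (by norm_num)
        split_ifs <;> linarith
      · push Not at hf
        have hpay : ∀ x ∈ T, (2 : ℝ) ^ (codeExp V (U.erase j) x +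
            (if V x j ∩ U = {j} then 0 else -1)) = (2 : ℝ) ^ codeExp V (U.erase j) x * 2⁻¹ := by
          intro x hx
          rw [if_neg (hf x hx), Real.rpow_add (by norm_num), Real.rpow_neg_one]
        rw [Finset.sum_congr rfl hpay, ← Finset.sum_mul,
          ← Finset.sum_filter_add_sum_filter_not T (fun x => x j = true)]
        have h1 := hhalf true
        have h2 := hhalf false
        simp only [Bool.not_eq_true]
        linarith
    have hjensen : ∀ x ∈ T, (2 : ℝ) ^ codeExp V U x ≤ ∑ j ∈ U, (1 / (U.card : ℝ)) *
        (2 : ℝ) ^ (codeExp V (U.erase j) x + (if V x j ∩ U = {j} then 0 else -1)) := by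
      intro x hx
      rw [codeExp_eq_average V U hU x (hV x (hT hx)), Real.rpow_sum_of_pos (by norm_num)]
      simp_rw [mul_comm (1 / (U.card : ℝ)) (_ + _), Real.rpow_mul (show (0 : ℝ) ≤ 2 by norm_num)]
      apply Real.geom_mean_le_arith_mean_weighted
      · intro j _; positivity
      · simp [hs']
      · intro j _; positivity
    calc ∑ x ∈ T, (2 : ℝ) ^ codeExp V U x
        ≤ ∑ x ∈ T, ∑ j ∈ U, (1 / (U.card : ℝ)) * (2 : ℝ) ^ (codeExp V (U.erase j) x +
            (if V x j ∩ U = {j} then 0 else -1)) := Finset.sum_le_sum hjensen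
      _ = ∑ j ∈ U, (1 / (U.card : ℝ)) * ∑ x ∈ T, (2 : ℝ) ^ (codeExp V (U.erase j) x +
            (if V x j ∩ U = {j} then 0 else -1)) := by
          rw [Finset.sum_comm]
          simp_rw [Finset.mul_sum]
      _ ≤ ∑ j ∈ U, (1 / (U.card : ℝ)) * 1 :=
          Finset.sum_le_sum fun j hj => mul_le_mul_of_nonneg_left (hstep j hj) (by positivity)
      _ = 1 := by simp [hs']

/-! ### Critical clauses and the bound -/

lemma Lit.eval_congr {n : ℕ} (l : Lit n) {x y : Fin n → Bool} (h : x l.idx = y l.idx) :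
    l.eval x = l.eval y := by
  simp [Lit.eval, h]

/-- Critical clauses: at an isolated solution `x` some clause of `φ` is falsified by flipping `x i`.
Hence it mentions `i`, and a solution agreeing with `x` on its other variables agrees at `i`. -/
lemma exists_critical {n : ℕ} {φ : CNF n} {x : Fin n → Bool} (hx : IsIsolated φ x) (i : Fin n) :
    ∃ c ∈ φ, i ∈ c.image Lit.idx ∧ ∀ y, φ.sat y →
      (∀ l ∈ c.image Lit.idx, l ≠ i → y l = x l) → y i = x i := by
  have hd : hammingDist x (Function.update x i (!x i)) = 1 := by
    rw [hammingDist, Finset.card_eq_one]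
    refine ⟨i, ?_⟩
    ext j
    by_cases h : j = i
    · subst h; simp
    · simp [h]
  have hns := hx.2 _ hd
  unfold CNF.sat at hns
  push Not at hns
  obtain ⟨c, hc, hcf⟩ := hns
  refine ⟨c, hc, ?_, ?_⟩
  · obtain ⟨l, hl, hlx⟩ := hx.1 c hc
    rw [Finset.mem_image]
    refine ⟨l, hl, ?_⟩
    by_contra hli
    apply hcf l hl
    rw [← hlx]
    exact l.eval_congr (by simp [hli])
  · intro y hy hag
    by_contra hyi
    obtain ⟨l, hl, hly⟩ := hy c hc
    apply hcf l hl
    rw [← hly]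
    apply l.eval_congr
    by_cases hli : l.idx = i
    · rw [hli, Function.update_self]
      cases h1 : x i <;> cases h2 : y i <;> simp_all
    · rw [Function.update_of_ne hli]
      exact (hag _ (Finset.mem_image_of_mem _ hl) hli).symm

/-- satisfiability coding lemma: a `k`-CNF has at most `2^{n−n/k}`
isolated solutions. -/
theorem stmt14 (n k : ℕ) (hn : 1 ≤ n) (hk : 1 ≤ k) (φ : CNF n)
    (hwidth : ∀ c ∈ φ, c.card ≤ k) :
    (Nat.card {x : Fin n → Bool // IsIsolated φ x} : ℝ) ≤
      (2 : ℝ) ^ ((n : ℝ) - (n : ℝ) / (k : ℝ)) := by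
  classical
  have hchoice : ∀ x : Fin n → Bool, ∀ i : Fin n, ∃ c : Clause n, IsIsolated φ x →
      c ∈ φ ∧ i ∈ c.image Lit.idx ∧ ∀ y, φ.sat y →
        (∀ l ∈ c.image Lit.idx, l ≠ i → y l = x l) → y i = x i := by
    intro x i
    by_cases hx : IsIsolated φ x
    · obtain ⟨c, hc⟩ := exists_critical hx i
      exact ⟨c, fun _ => hc⟩
    · exact ⟨∅, fun h => absurd h hx⟩
  choose C hC using hchoice
  set S : Finset (Fin n → Bool) := Finset.univ.filter (IsIsolated φ) with hS
  have hmem : ∀ x, x ∈ S ↔ IsIsolated φ x := by simp [hS]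
  set V : (Fin n → Bool) → Fin n → Finset (Fin n) := fun x i => (C x i).image Lit.idx with hVdef
  have hV : ∀ x ∈ S, ∀ i, i ∈ V x i := fun x hx i => (hC x i ((hmem x).mp hx)).2.1
  have hkraft := kraft V S hV
    (fun x hx y hy i => (hC x i ((hmem x).mp hx)).2.2 y ((hmem y).mp hy).1)
    Finset.univ S subset_rfl (by simp)
  have hexp : ∀ x ∈ S, -((n : ℝ) - (n : ℝ) / (k : ℝ)) ≤ codeExp V Finset.univ x := by
    intro x hx
    have hle : ∑ _i : Fin n, 1 / (k : ℝ) ≤ ∑ i : Fin n, 1 / ((V x i).card : ℝ) := by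
      refine Finset.sum_le_sum fun i _ => ?_
      have hpos : 0 < (V x i).card := Finset.card_pos.mpr ⟨i, hV x hx i⟩
      have hcard : (V x i).card ≤ k :=
        Finset.card_image_le.trans (hwidth _ (hC x i ((hmem x).mp hx)).1)
      exact one_div_le_one_div_of_le (by exact_mod_cast hpos) (by exact_mod_cast hcard)
    simp only [codeExp, Finset.inter_univ, Finset.card_univ, Fintype.card_fin]
    rw [Finset.sum_const, Finset.card_univ, Fintype.card_fin, nsmul_eq_mul, mul_one_div] at hle
    linarith
  have hbound : (S.card : ℝ) * (2 : ℝ) ^ (-((n : ℝ) - (n : ℝ) / (k : ℝ))) ≤ 1 := by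
    rw [← nsmul_eq_mul, ← Finset.sum_const]
    exact (Finset.sum_le_sum fun x hx =>
      Real.rpow_le_rpow_of_exponent_le (by norm_num) (hexp x hx)).trans hkraft
  have hcardS : Nat.card {x : Fin n → Bool // IsIsolated φ x} = S.card := by
    rw [Nat.card_eq_fintype_card, Fintype.card_subtype]
  rw [hcardS]
  rwa [Real.rpow_neg (by norm_num), ← div_eq_mul_inv, div_le_one (by positivity)] at hbound
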